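/- Let τ > 0 and let γ be the centered Gaussian probability measure on ℝ with variance 2τ. Then every smooth function f : ℝ → [0,1] with bounded derivative satisfies the Bobkov inequality I(∫_ℝ f dγ) ≤ ∫_ℝ √(I(f(x))² + 2τ·f'(x)²) dγ(x). -/

import Mathlib

open Real MeasureTheory ProbabilityTheory

/-- The standard Gaussian density. -/
noncomputable def gaussPdf (z : ℝ) : ℝ := (Real.sqrt (2 * Real.pi))⁻¹ * Real.exp (-z ^ 2 / 2)

/-- The standard normal CDF. -/
noncomputable def Phi (r : ℝ) : ℝ := ∫ z in Set.Iic r, gaussPdf z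

/-- The inverse of the standard normal CDF. -/
noncomputable def PhiInv : ℝ → ℝ := Function.invFun Phi

/-- The Gaussian isoperimetric profile `I = φ ∘ Φ⁻¹`. -/
noncomputable def gaussI (a : ℝ) : ℝ := gaussPdf (PhiInv a)

open Filter Topology

lemma gaussPdf_eq (z : ℝ) : gaussPdf z = gaussianPDFReal 0 1 z := by
  simp [gaussPdf, gaussianPDFReal]

lemma gaussPdf_pos (z : ℝ) : 0 < gaussPdf z := by
  rw [gaussPdf_eq]; exact gaussianPDFReal_pos _ _ _ one_ne_zero

lemma gaussPdf_le_one (z : ℝ) : gaussPdf z ≤ 1 := by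
  unfold gaussPdf
  have h1 : 1 ≤ Real.sqrt (2 * Real.pi) := by
    rw [Real.one_le_sqrt]; nlinarith [Real.pi_gt_three]
  have h2 : Real.exp (-z ^ 2 / 2) ≤ 1 := by
    rw [Real.exp_le_one_iff]; nlinarith [sq_nonneg z]
  have h3 : (Real.sqrt (2 * Real.pi))⁻¹ ≤ 1 := inv_le_one_of_one_le₀ h1
  exact mul_le_one₀ h3 (Real.exp_pos _).le h2

lemma gaussPdf_hasDerivAt (z : ℝ) : HasDerivAt gaussPdf (-z * gaussPdf z) z := by
  unfold gaussPdf
  have h : HasDerivAt (fun z : ℝ => -z ^ 2 / 2) (-z) z := by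
    refine (((hasDerivAt_id z).pow 2).neg.div_const 2).congr_deriv ?_
    simp; ring
  refine ((h.exp).const_mul ((Real.sqrt (2 * Real.pi))⁻¹)).congr_deriv ?_
  ring

lemma gaussPdf_continuous : Continuous gaussPdf :=
  continuous_iff_continuousAt.2 fun z => (gaussPdf_hasDerivAt z).continuousAt

lemma gaussPdf_integrable : Integrable gaussPdf := by
  have : gaussPdf = gaussianPDFReal 0 1 := funext gaussPdf_eq
  rw [this]; exact integrable_gaussianPDFReal 0 1

lemma Phi_eq_cdf (r : ℝ) : Phi r = cdf (gaussianReal 0 1) r := by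
  rw [cdf_eq_real, measureReal_def, gaussianReal_apply_eq_integral _ one_ne_zero, ENNReal.toReal_ofReal]
  · unfold Phi; simp_rw [gaussPdf_eq]
  · exact integral_nonneg fun x => gaussianPDFReal_nonneg _ _ _

lemma Phi_hasDerivAt (r : ℝ) : HasDerivAt Phi (gaussPdf r) r := by
  have h : Phi = fun u => Phi 0 + ∫ x in (0:ℝ)..u, gaussPdf x := by
    funext u
    rw [← intervalIntegral.integral_Iic_sub_Iic gaussPdf_integrable.integrableOn
      gaussPdf_integrable.integrableOn]
    unfold Phi; ring
  rw [h]
  apply HasDerivAt.const_add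
  exact intervalIntegral.integral_hasDerivAt_right gaussPdf_integrable.intervalIntegrable
    (gaussPdf_continuous.stronglyMeasurableAtFilter _ _) gaussPdf_continuous.continuousAt

lemma Phi_strictMono : StrictMono Phi :=
  strictMono_of_hasDerivAt_pos Phi_hasDerivAt gaussPdf_pos

lemma Phi_continuous : Continuous Phi :=
  continuous_iff_continuousAt.2 fun z => (Phi_hasDerivAt z).continuousAt

lemma Phi_mem (r : ℝ) : Phi r ∈ Set.Ioo (0:ℝ) 1 := by
  constructor
  · refine lt_of_le_of_lt ?_ (Phi_strictMono (show r - 1 < r by linarith))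
    rw [Phi_eq_cdf]; exact cdf_nonneg _ _
  · refine lt_of_lt_of_le (Phi_strictMono (show r < r + 1 by linarith)) ?_
    rw [Phi_eq_cdf]; exact cdf_le_one _ _

lemma Phi_surj {a : ℝ} (ha : a ∈ Set.Ioo (0:ℝ) 1) : ∃ r, Phi r = a := by
  have hP : Phi = fun r => cdf (gaussianReal 0 1) r := funext Phi_eq_cdf
  have h0 : Tendsto Phi atBot (𝓝 0) := by rw [hP]; exact tendsto_cdf_atBot _
  have h1 : Tendsto Phi atTop (𝓝 1) := by rw [hP]; exact tendsto_cdf_atTop _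
  obtain ⟨x, hx⟩ := (h0.eventually_lt_const ha.1).exists
  obtain ⟨y, hy⟩ := (h1.eventually_const_lt ha.2).exists
  exact mem_range_of_exists_le_of_exists_ge Phi_continuous ⟨x, hx.le⟩ ⟨y, hy.le⟩

lemma PhiInv_Phi (r : ℝ) : PhiInv (Phi r) = r :=
  Function.leftInverse_invFun Phi_strictMono.injective r

lemma Phi_PhiInv {a : ℝ} (ha : a ∈ Set.Ioo (0:ℝ) 1) : Phi (PhiInv a) = a :=
  Function.invFun_eq (Phi_surj ha)

lemma PhiInv_strictMonoOn : StrictMonoOn PhiInv (Set.Ioo 0 1) := by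
  intro a ha b hb hab
  rw [← Phi_strictMono.lt_iff_lt, Phi_PhiInv ha, Phi_PhiInv hb]; exact hab

lemma PhiInv_hasDerivAt {a : ℝ} (ha : a ∈ Set.Ioo (0:ℝ) 1) :
    HasDerivAt PhiInv (gaussI a)⁻¹ a := by
  have hn : Set.Ioo (0:ℝ) 1 ∈ 𝓝 a := Ioo_mem_nhds ha.1 ha.2
  have hc : ContinuousAt PhiInv a := by
    apply PhiInv_strictMonoOn.continuousAt_of_image_mem_nhds hn
    convert univ_mem
    rw [Set.eq_univ_iff_forall]
    intro x
    exact ⟨Phi x, Phi_mem x, PhiInv_Phi x⟩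
  exact HasDerivAt.of_local_left_inverse hc (Phi_hasDerivAt _) (gaussPdf_pos _).ne'
    (by filter_upwards [hn] with y hy using Phi_PhiInv hy)

lemma gaussI_pos (a : ℝ) : 0 < gaussI a := gaussPdf_pos _
lemma gaussI_le_one (a : ℝ) : gaussI a ≤ 1 := gaussPdf_le_one _

lemma gaussI_hasDerivAt {a : ℝ} (ha : a ∈ Set.Ioo (0:ℝ) 1) :
    HasDerivAt gaussI (-PhiInv a) a := by
  refine ((gaussPdf_hasDerivAt (PhiInv a)).comp a (PhiInv_hasDerivAt ha)).congr_deriv ?_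
  have := (gaussI_pos a).ne'
  unfold gaussI at *
  field_simp

/-- Stein's lemma -/
lemma stein {K K' : ℝ → ℝ} {M M' : ℝ} (hK : ∀ x, HasDerivAt K (K' x) x) (hb : ∀ x, |K x| ≤ M)
    (hb' : ∀ x, |K' x| ≤ M') :
    ∫ x, x * K x ∂(gaussianReal 0 1) = ∫ x, K' x ∂(gaussianReal 0 1) := by
  have hKc : Continuous K := continuous_iff_continuousAt.2 fun z => (hK z).continuousAt
  have hK'm : Measurable K' := by
    have : K' = deriv K := funext fun x => (hK x).deriv.symm
    rw [this]; exact measurable_deriv K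
  rw [integral_gaussianReal_eq_integral_smul one_ne_zero,
    integral_gaussianReal_eq_integral_smul one_ne_zero]
  simp_rw [← gaussPdf_eq, smul_eq_mul]
  have hx : Integrable (fun x : ℝ => x * gaussPdf x) := by
    have := (integrable_mul_exp_neg_mul_sq (b := 1/2) (by norm_num)).const_mul
      ((Real.sqrt (2 * Real.pi))⁻¹)
    convert this using 1
    funext x
    unfold gaussPdf
    rw [show -x ^ 2 / 2 = -(1/2) * x^2 by ring]; ring
  have := MeasureTheory.integral_mul_deriv_eq_deriv_mul_of_integrable
    (u := K) (v := gaussPdf) (u' := K') (v' := fun z => -z * gaussPdf z)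
    (fun x _ => hK x) (fun x _ => gaussPdf_hasDerivAt x) ?_ ?_ ?_
  · have e1 : ∀ x, gaussPdf x * (x * K x) = -(K x * (-x * gaussPdf x)) := fun x => by ring
    simp_rw [e1]
    rw [integral_neg, this, neg_neg]
    congr 1; funext x; ring
  · exact (Integrable.bdd_mul (c := M) (hx.neg) hKc.aestronglyMeasurable
      (Eventually.of_forall hb)).congr (Eventually.of_forall fun x => by
        simp)
  · exact Integrable.bdd_mul (c := M') gaussPdf_integrable hK'm.aestronglyMeasurable
      (Eventually.of_forall hb')
  · exact Integrable.bdd_mul (c := M) gaussPdf_integrable hKc.aestronglyMeasurable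
      (Eventually.of_forall hb)

/-- Mehler average -/
noncomputable def mehler (h : ℝ → ℝ) (θ w : ℝ) : ℝ :=
  ∫ z, h (Real.sin θ * w + Real.cos θ * z) ∂(gaussianReal 0 1)

lemma integrable_of_bdd {μ : Measure ℝ} [IsFiniteMeasure μ] {h : ℝ → ℝ} (hc : Measurable h) {M : ℝ}
    (hM : ∀ x, |h x| ≤ M) : Integrable h μ :=
  Integrable.of_bound hc.aestronglyMeasurable M (Eventually.of_forall hM)

lemma integrable_abs_gauss : Integrable (fun x : ℝ => |x|) (gaussianReal 0 1) := by
  have := (memLp_id_gaussianReal (μ := 0) (v := 1) 1).integrable (by simp)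
  exact this.abs

lemma mehler_bound {h : ℝ → ℝ} {M : ℝ} (hM : ∀ x, |h x| ≤ M) (θ w : ℝ) : |mehler h θ w| ≤ M := by
  unfold mehler
  have := norm_integral_le_of_norm_le_const (μ := gaussianReal 0 1)
    (f := fun z => h (Real.sin θ * w + Real.cos θ * z)) (C := M) (Eventually.of_forall fun x => hM _)
  simpa using this

lemma mehler_cont {h : ℝ → ℝ} (hc : Continuous h) {M : ℝ} (hM : ∀ x, |h x| ≤ M) (θ : ℝ) :
    Continuous (mehler h θ) := by
  unfold mehler
  refine continuous_of_dominated (bound := fun _ => M) (fun w => ?_) (fun w => ?_)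
    (integrable_const _) (Eventually.of_forall fun z => ?_)
  · exact (by fun_prop : Continuous fun z => h (Real.sin θ * w + Real.cos θ * z)).aestronglyMeasurable
  · exact Eventually.of_forall fun z => hM _
  · fun_prop

lemma mehler_deriv_w {h h' : ℝ → ℝ} {M : ℝ} (hd : ∀ x, HasDerivAt h (h' x) x)
    (hc' : Continuous h') (hM : ∀ x, |h x| ≤ M) (hM' : ∀ x, |h' x| ≤ M) (θ w : ℝ) :
    HasDerivAt (mehler h θ) (Real.sin θ * mehler h' θ w) w := by
  have hc : Continuous h := continuous_iff_continuousAt.2 fun z => (hd z).continuousAt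
  have := (hasDerivAt_integral_of_dominated_loc_of_deriv_le (μ := gaussianReal 0 1) (x₀ := w)
    (F := fun w z => h (Real.sin θ * w + Real.cos θ * z))
    (F' := fun w z => Real.sin θ * h' (Real.sin θ * w + Real.cos θ * z))
    (s := Set.univ) (bound := fun _ => M) univ_mem ?_ ?_ ?_ ?_ (integrable_const _) ?_).2
  · unfold mehler
    rw [← integral_const_mul]
    exact this
  · exact Eventually.of_forall fun x => (by fun_prop : Continuous _).aestronglyMeasurable
  · exact integrable_of_bdd (by fun_prop : Continuous _).measurable fun x => hM _
  · exact (by fun_prop : Continuous _).aestronglyMeasurable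
  · refine Eventually.of_forall fun z x _ => ?_
    rw [Real.norm_eq_abs, abs_mul]
    have := Real.abs_sin_le_one θ
    have h2 := hM' (Real.sin θ * x + Real.cos θ * z)
    nlinarith [abs_nonneg (h' (Real.sin θ * x + Real.cos θ * z))]
  · refine Eventually.of_forall fun z x _ => ?_
    have h1 : HasDerivAt (fun x => Real.sin θ * x + Real.cos θ * z) (Real.sin θ) x := by
      simpa using ((hasDerivAt_id x).const_mul (Real.sin θ)).add_const (Real.cos θ * z)
    refine ((hd _).comp x h1).congr_deriv ?_
    ring

lemma mehler_deriv_t {h h' h'' : ℝ → ℝ} {M : ℝ} (hd : ∀ x, HasDerivAt h (h' x) x)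
    (hd' : ∀ x, HasDerivAt h' (h'' x) x)
    (hM : ∀ x, |h x| ≤ M) (hM' : ∀ x, |h' x| ≤ M) (hM'' : ∀ x, |h'' x| ≤ M) (θ w : ℝ) :
    HasDerivAt (fun θ => mehler h θ w)
      (Real.cos θ * w * mehler h' θ w - Real.sin θ * Real.cos θ * mehler h'' θ w) θ := by
  have hc : Continuous h := continuous_iff_continuousAt.2 fun z => (hd z).continuousAt
  have hc' : Continuous h' := continuous_iff_continuousAt.2 fun z => (hd' z).continuousAt
  have hM0 : 0 ≤ M := (abs_nonneg _).trans (hM 0)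
  have key := (hasDerivAt_integral_of_dominated_loc_of_deriv_le (μ := gaussianReal 0 1) (x₀ := θ)
    (F := fun θ z => h (Real.sin θ * w + Real.cos θ * z))
    (F' := fun θ z => (Real.cos θ * w - Real.sin θ * z) * h' (Real.sin θ * w + Real.cos θ * z))
    (s := Set.univ) (bound := fun z => (|w| + |z|) * M) univ_mem ?_ ?_ ?_ ?_ ?_ ?_).2
  · refine key.congr_deriv ?_
    have st := stein (K := fun z => h' (Real.sin θ * w + Real.cos θ * z))
      (K' := fun z => Real.cos θ * h'' (Real.sin θ * w + Real.cos θ * z)) (M := M) (M' := M) ?_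
      (fun x => hM' _) ?_
    · rw [integral_const_mul] at st
      have i1 : Integrable (fun z => h' (Real.sin θ * w + Real.cos θ * z)) (gaussianReal 0 1) :=
        integrable_of_bdd (by fun_prop : Continuous _).measurable fun x => hM' _
      have i2 : Integrable (fun z => z * h' (Real.sin θ * w + Real.cos θ * z)) (gaussianReal 0 1) := by
        refine Integrable.mul_bdd (c := M) ?_ (by fun_prop : Continuous _).aestronglyMeasurable
          (Eventually.of_forall fun x => hM' _)
        exact (memLp_id_gaussianReal (μ := 0) (v := 1) 1).integrable (by simp)
      unfold mehler
      rw [mul_assoc (Real.sin θ), ← st, ← integral_const_mul, ← integral_const_mul,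
        ← integral_sub (i1.const_mul _) (i2.const_mul _)]
      congr 1; funext z; ring
    · intro x
      have h1 : HasDerivAt (fun x => Real.sin θ * w + Real.cos θ * x) (Real.cos θ) x := by
        simpa using ((hasDerivAt_id x).const_mul (Real.cos θ)).const_add (Real.sin θ * w)
      refine ((hd' _).comp x h1).congr_deriv ?_
      ring
    · intro x
      rw [abs_mul]
      have := Real.abs_cos_le_one θ
      have h2 := hM'' (Real.sin θ * w + Real.cos θ * x)
      nlinarith [abs_nonneg (h'' (Real.sin θ * w + Real.cos θ * x))]
  · exact Eventually.of_forall fun x => (by fun_prop : Continuous _).aestronglyMeasurable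
  · exact integrable_of_bdd (by fun_prop : Continuous _).measurable fun x => hM _
  · exact (by fun_prop : Continuous _).aestronglyMeasurable
  · refine Eventually.of_forall fun z x _ => ?_
    rw [Real.norm_eq_abs, abs_mul]
    refine mul_le_mul ?_ (hM' _) (abs_nonneg _) (by positivity)
    refine (abs_sub _ _).trans ?_
    rw [abs_mul, abs_mul]
    have := Real.abs_sin_le_one x
    have := Real.abs_cos_le_one x
    nlinarith [abs_nonneg w, abs_nonneg z]
  · exact ((integrable_const _).add integrable_abs_gauss).mul_const M
  · refine Eventually.of_forall fun z x _ => ?_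
    have h1 : HasDerivAt (fun x => Real.sin x * w + Real.cos x * z)
      (Real.cos x * w - Real.sin x * z) x := by
      refine (((Real.hasDerivAt_sin x).mul_const w).add
        ((Real.hasDerivAt_cos x).mul_const z)).congr_deriv ?_
      ring
    refine ((hd _).comp x h1).congr_deriv ?_
    ring

lemma bd_mul {x y X Y : ℝ} (hx : |x| ≤ X) (hy : |y| ≤ Y) : |x * y| ≤ X * Y := by
  rw [abs_mul]; exact mul_le_mul hx hy (abs_nonneg _) ((abs_nonneg _).trans hx)
lemma bd_add {x y X Y : ℝ} (hx : |x| ≤ X) (hy : |y| ≤ Y) : |x + y| ≤ X + Y :=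
  (abs_add_le _ _).trans (add_le_add hx hy)
lemma bd_sub {x y X Y : ℝ} (hx : |x| ≤ X) (hy : |y| ≤ Y) : |x - y| ≤ X + Y :=
  (abs_sub _ _).trans (add_le_add hx hy)
lemma bd_neg {x X : ℝ} (hx : |x| ≤ X) : |-x| ≤ X := by rwa [abs_neg]

/-- the root -/
noncomputable def rt (I P : ℝ) : ℝ := Real.sqrt (I ^ 2 + P ^ 2)

lemma rt_pos {I : ℝ} (hI : 0 < I) (P : ℝ) : 0 < rt I P := Real.sqrt_pos.2 (by positivity)
lemma rt_sq (I P : ℝ) : rt I P ^ 2 = I ^ 2 + P ^ 2 := Real.sq_sqrt (by positivity)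
lemma le_rt {I : ℝ} (P : ℝ) : I ≤ rt I P := Real.le_sqrt_of_sq_le (by nlinarith [sq_nonneg P])
lemma abs_le_rt (I P : ℝ) : |P| ≤ rt I P :=
  Real.le_sqrt_of_sq_le (by rw [sq_abs]; nlinarith [sq_nonneg I])
lemma rt_bd1 {I : ℝ} (hI : 0 < I) (P : ℝ) : |I / rt I P| ≤ 1 := by
  rw [abs_of_pos (div_pos hI (rt_pos hI P))]; exact (div_le_one (rt_pos hI P)).2 (le_rt P)
lemma rt_bd2 {I : ℝ} (hI : 0 < I) (P : ℝ) : |P / rt I P| ≤ 1 := by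
  rw [abs_div, abs_of_pos (rt_pos hI P)]; exact (div_le_one (rt_pos hI P)).2 (abs_le_rt I P)
lemma rt_bd3 {I D : ℝ} (hI : 0 < I) (hD : I⁻¹ ≤ D) (P : ℝ) : |(rt I P)⁻¹| ≤ D := by
  rw [abs_of_pos (inv_pos.2 (rt_pos hI P))]
  exact (inv_anti₀ hI (le_rt P)).trans hD

lemma rt_hasDerivAt {I P : ℝ → ℝ} {I' P' x : ℝ} (hI : HasDerivAt I I' x) (hP : HasDerivAt P P' x)
    (h0 : 0 < I x) :
    HasDerivAt (fun x => rt (I x) (P x))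
      ((I x / rt (I x) (P x)) * I' + (P x / rt (I x) (P x)) * P') x := by
  have h : HasDerivAt (fun x => I x ^ 2 + P x ^ 2) (2 * (I x * I' + P x * P')) x := by
    refine ((hI.pow 2).add (hP.pow 2)).congr_deriv ?_
    simp; ring
  refine (h.sqrt (by positivity)).congr_deriv ?_
  change 2 * (I x * I' + P x * P') / (2 * rt (I x) (P x)) = _
  have := (rt_pos h0 (P x)).ne'
  field_simp

lemma K_hasDerivAt {I v p q : ℝ → ℝ} {s c r x : ℝ} (h0 : 0 < I x)
    (hI : HasDerivAt I (-v x * (s * p x)) x) (hv : HasDerivAt v ((I x)⁻¹ * (s * p x)) x)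
    (hp : HasDerivAt p (s * q x) x) (hq : HasDerivAt q (s * r) x) :
    HasDerivAt (fun x => c * (-(I x / rt (I x) (s * p x)) * v x * p x
        + (s * p x) / rt (I x) (s * p x) * (s * q x)))
      (c * s * ((v x * v x * p x * p x - p x * p x - I x * v x * q x + s * s * q x * q x
          + s * s * p x * r) * (rt (I x) (s * p x))⁻¹
        - (-(I x / rt (I x) (s * p x)) * v x * p x
        + (s * p x) / rt (I x) (s * p x) * (s * q x)) *
        (-(I x / rt (I x) (s * p x)) * v x * p x
        + (s * p x) / rt (I x) (s * p x) * (s * q x)) * (rt (I x) (s * p x))⁻¹)) x := by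
  have hG := rt_hasDerivAt hI (hp.const_mul s) h0
  have hg0 := (rt_pos h0 (s * p x)).ne'
  have hsq := rt_sq (I x) (s * p x)
  refine ((((hI.div hG hg0).neg.mul hv).mul hp).add
    (((hp.const_mul s).div hG hg0).mul (hq.const_mul s))).const_mul c |>.congr_deriv ?_
  simp only [Pi.mul_apply, Pi.neg_apply, Pi.div_apply]
  generalize rt (I x) (s * p x) = G at *
  generalize I x = I at *
  generalize p x = p at *
  generalize q x = q at *
  generalize v x = v at *
  field_simp
  ring

lemma alg_nonneg {I v p q r s c G : ℝ} (h0 : 0 < G) (hG : G ^ 2 = I ^ 2 + (s * p) ^ 2)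
    (hs : 0 ≤ s) (hc : 0 ≤ c) :
    0 ≤ (c * s * ((v * v * p * p - p * p - I * v * q + s * s * q * q
          + s * s * p * r) * G⁻¹
        - (-(I / G) * v * p + (s * p) / G * (s * q)) *
        (-(I / G) * v * p + (s * p) / G * (s * q)) * G⁻¹)) +
       (I * v * s * c * q + s * c * p ^ 2 - s ^ 3 * c * p * r) / G := by
  have : (c * s * ((v * v * p * p - p * p - I * v * q + s * s * q * q
          + s * s * p * r) * G⁻¹
        - (-(I / G) * v * p + (s * p) / G * (s * q)) *
        (-(I / G) * v * p + (s * p) / G * (s * q)) * G⁻¹)) +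
       (I * v * s * c * q + s * c * p ^ 2 - s ^ 3 * c * p * r) / G
       = s ^ 3 * c * (v * p ^ 2 + I * q) ^ 2 / G ^ 3 := by
    field_simp
    rw [hG]; ring
  rw [this]; positivity

lemma mehler_mem {h : ℝ → ℝ} (hc : Continuous h) {a b : ℝ} (hab : ∀ x, h x ∈ Set.Icc a b) (θ w : ℝ) :
    mehler h θ w ∈ Set.Icc a b := by
  have hi : Integrable (fun z => h (Real.sin θ * w + Real.cos θ * z)) (gaussianReal 0 1) :=
    integrable_of_bdd (M := max |a| |b|) (by fun_prop : Continuous _).measurable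
      fun x => abs_le_max_abs_abs (hab _).1 (hab _).2
  constructor
  · have := integral_mono (integrable_const a) hi (fun z => (hab _).1)
    simpa [mehler] using this
  · have := integral_mono hi (integrable_const b) (fun z => (hab _).2)
    simpa [mehler] using this

lemma bobkov_nice {f0 f1 f2 f3 : ℝ → ℝ} {M ε : ℝ} (hε : 0 < ε)
    (h01 : ∀ x, f0 x ∈ Set.Icc ε (1 - ε))
    (hd0 : ∀ x, HasDerivAt f0 (f1 x) x) (hd1 : ∀ x, HasDerivAt f1 (f2 x) x)
    (hd2 : ∀ x, HasDerivAt f2 (f3 x) x) (hc3 : Continuous f3)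
    (hM0 : ∀ x, |f0 x| ≤ M) (hM1 : ∀ x, |f1 x| ≤ M) (hM2 : ∀ x, |f2 x| ≤ M)
    (hM3 : ∀ x, |f3 x| ≤ M) :
    gaussI (∫ x, f0 x ∂(gaussianReal 0 1)) ≤
      ∫ x, rt (gaussI (f0 x)) (f1 x) ∂(gaussianReal 0 1) := by
  have hc0 : Continuous f0 := continuous_iff_continuousAt.2 fun z => (hd0 z).continuousAt
  have hc1 : Continuous f1 := continuous_iff_continuousAt.2 fun z => (hd1 z).continuousAt
  have hc2 : Continuous f2 := continuous_iff_continuousAt.2 fun z => (hd2 z).continuousAt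
  have hsub : Set.Icc ε (1 - ε) ⊆ Set.Ioo 0 1 := fun x hx =>
    ⟨hε.trans_le hx.1, hx.2.trans_lt (by linarith)⟩
  have hvc : ContinuousOn PhiInv (Set.Ioo 0 1) := fun x hx =>
    (PhiInv_hasDerivAt hx).continuousAt.continuousWithinAt
  have hIc : ContinuousOn gaussI (Set.Ioo 0 1) := fun x hx =>
    (gaussI_hasDerivAt hx).continuousAt.continuousWithinAt
  obtain ⟨V, hV⟩ := (isCompact_Icc (a := ε) (b := 1 - ε)).exists_bound_of_continuousOn
    (hvc.mono hsub)
  obtain ⟨D, hD⟩ := (isCompact_Icc (a := ε) (b := 1 - ε)).exists_bound_of_continuousOn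
    ((hIc.mono hsub).inv₀ fun x _ => (gaussI_pos x).ne')
  have hum : ∀ θ w, mehler f0 θ w ∈ Set.Icc ε (1 - ε) := mehler_mem hc0 h01
  have hu : ∀ θ w, mehler f0 θ w ∈ Set.Ioo 0 1 := fun θ w => hsub (hum θ w)
  have hvb : ∀ θ w, |PhiInv (mehler f0 θ w)| ≤ V := fun θ w => hV _ (hum θ w)
  have hIb : ∀ θ w, (gaussI (mehler f0 θ w))⁻¹ ≤ D := fun θ w =>
    (le_abs_self _).trans (hD _ (hum θ w))
  have hI1 : ∀ θ w, |gaussI (mehler f0 θ w)| ≤ 1 := fun θ w => by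
    rw [abs_of_pos (gaussI_pos _)]; exact gaussI_le_one _
  have cu := mehler_cont hc0 hM0
  have cp := mehler_cont hc1 hM1
  have cq := mehler_cont hc2 hM2
  have cr := mehler_cont hc3 hM3
  have cI : ∀ θ, Continuous fun w => gaussI (mehler f0 θ w) := fun θ =>
    hIc.comp_continuous (cu θ) (hu θ)
  have cv : ∀ θ, Continuous fun w => PhiInv (mehler f0 θ w) := fun θ =>
    hvc.comp_continuous (cu θ) (hu θ)
  have bp := mehler_bound hM1
  have bq := mehler_bound hM2
  have br := mehler_bound hM3
  set G : ℝ → ℝ → ℝ := fun θ w => rt (gaussI (mehler f0 θ w)) (Real.sin θ * mehler f1 θ w) with hGdef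
  have cG : ∀ θ, Continuous (G θ) := fun θ => by
    have := cI θ; have := cp θ
    simp only [hGdef, rt]; fun_prop
  have hG0 : ∀ θ w, 0 < G θ w := fun θ w => rt_pos (gaussI_pos _) _
  let F' : ℝ → ℝ → ℝ := fun θ w =>
    (gaussI (mehler f0 θ w) / G θ w) * (-PhiInv (mehler f0 θ w) *
      (Real.cos θ * w * mehler f1 θ w - Real.sin θ * Real.cos θ * mehler f2 θ w))
    + (Real.sin θ * mehler f1 θ w / G θ w) * (Real.cos θ * mehler f1 θ w +
      Real.sin θ * (Real.cos θ * w * mehler f2 θ w - Real.sin θ * Real.cos θ * mehler f3 θ w))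
  have hGd : ∀ θ w, HasDerivAt (fun θ => G θ w) (F' θ w) θ := fun θ w => by
    have h1 := (gaussI_hasDerivAt (hu θ w)).comp θ (mehler_deriv_t hd0 hd1 hM0 hM1 hM2 θ w)
    have h2 := (Real.hasDerivAt_sin θ).mul (mehler_deriv_t hd1 hd2 hM1 hM2 hM3 θ w)
    exact rt_hasDerivAt h1 h2 (gaussI_pos _)
  have hFb : ∀ θ w, |F' θ w| ≤ 1 * (V * (1 * |w| * M + 1 * 1 * M)) +
      1 * (1 * M + 1 * (1 * |w| * M + 1 * 1 * M)) := fun θ w => by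
    have hs := Real.abs_sin_le_one θ
    have hc := Real.abs_cos_le_one θ
    have hw : |w| ≤ |w| := le_rfl
    exact bd_add (bd_mul (rt_bd1 (gaussI_pos _) _) (bd_mul (bd_neg (hvb θ w))
      (bd_sub (bd_mul (bd_mul hc hw) (bp θ w)) (bd_mul (bd_mul hs hc) (bq θ w)))))
      (bd_mul (rt_bd2 (gaussI_pos _) _) (bd_add (bd_mul hc (bp θ w)) (bd_mul hs
      (bd_sub (bd_mul (bd_mul hc hw) (bq θ w)) (bd_mul (bd_mul hs hc) (br θ w))))))
  have hGb : ∀ θ w, |G θ w| ≤ 1 + 1 * M := fun θ w => by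
    have h1 : G θ w ≤ |gaussI (mehler f0 θ w)| + |Real.sin θ * mehler f1 θ w| := by
      apply Real.sqrt_le_iff.2 ⟨by positivity, ?_⟩
      rw [← sq_abs (gaussI _), ← sq_abs (Real.sin θ * _)]
      nlinarith [mul_nonneg (abs_nonneg (gaussI (mehler f0 θ w))) (abs_nonneg (Real.sin θ * mehler f1 θ w))]
    rw [abs_of_pos (hG0 θ w)]
    exact h1.trans (add_le_add (hI1 θ w) (bd_mul (Real.abs_sin_le_one θ) (bp θ w)))
  have hiG : ∀ θ, Integrable (G θ) (gaussianReal 0 1) := fun θ =>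
    integrable_of_bdd (cG θ).measurable (hGb θ)
  have iw : Integrable (fun x : ℝ => x) (gaussianReal 0 1) :=
    (memLp_id_gaussianReal (μ := 0) (v := 1) 1).integrable (by simp)
  have key : ∀ θ, Integrable (F' θ) (gaussianReal 0 1) ∧ 
      HasDerivAt (fun θ => ∫ w, G θ w ∂(gaussianReal 0 1)) (∫ w, F' θ w ∂(gaussianReal 0 1)) θ := fun θ => by
    refine hasDerivAt_integral_of_dominated_loc_of_deriv_le (μ := gaussianReal 0 1) (x₀ := θ)
      (F := G) (F' := F') (s := Set.univ) univ_mem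
      (Eventually.of_forall fun θ => (cG θ).aestronglyMeasurable) (hiG θ) ?_
      (Eventually.of_forall fun w θ _ => hFb θ w) ?_ (Eventually.of_forall fun w θ _ => hGd θ w)
    · have := cI θ; have := cv θ; have := cp θ; have := cq θ; have := cr θ; have := cG θ
      have h0 : ∀ w, G θ w ≠ 0 := fun w => (hG0 θ w).ne'
      refine Continuous.aestronglyMeasurable ?_
      change Continuous fun w => _
      fun_prop (disch := assumption)
    · have := integrable_abs_gauss
      fun_prop
  have nonneg : ∀ θ, 0 ≤ Real.sin θ → 0 ≤ Real.cos θ → 0 ≤ ∫ w, F' θ w ∂(gaussianReal 0 1) := by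
    intro θ hs hc
    have hs1' := Real.abs_sin_le_one θ
    have hc1' := Real.abs_cos_le_one θ
    have hKd := fun w => K_hasDerivAt (s := Real.sin θ) (c := Real.cos θ) (r := mehler f3 θ w)
      (I := fun w => gaussI (mehler f0 θ w)) (v := fun w => PhiInv (mehler f0 θ w))
      (p := mehler f1 θ) (q := mehler f2 θ) (x := w) (gaussI_pos _)
      ((gaussI_hasDerivAt (hu θ w)).comp w (mehler_deriv_w hd0 hc1 hM0 hM1 θ w))
      ((PhiInv_hasDerivAt (hu θ w)).comp w (mehler_deriv_w hd0 hc1 hM0 hM1 θ w))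
      (mehler_deriv_w hd1 hc2 hM1 hM2 θ w) (mehler_deriv_w hd2 hc3 hM2 hM3 θ w)
    set K : ℝ → ℝ := fun w => Real.cos θ * (-(gaussI (mehler f0 θ w) / rt (gaussI (mehler f0 θ w))
        (Real.sin θ * mehler f1 θ w)) * PhiInv (mehler f0 θ w) * mehler f1 θ w
        + (Real.sin θ * mehler f1 θ w) / rt (gaussI (mehler f0 θ w)) (Real.sin θ * mehler f1 θ w) *
        (Real.sin θ * mehler f2 θ w)) with hK
    have cK : Continuous K := continuous_iff_continuousAt.2 fun w => (hKd w).continuousAt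
    have bK : ∀ w, |K w| ≤ _ :=
      (fun w => bd_mul hc1' (bd_add (bd_mul (bd_mul (bd_neg (rt_bd1 (gaussI_pos _) _)) (hvb θ w))
        (bp θ w)) (bd_mul (rt_bd2 (gaussI_pos _) _) (bd_mul hs1' (bq θ w)))))
    obtain ⟨K', hKK', hK'⟩ : ∃ K' : ℝ → ℝ, (∀ w, HasDerivAt K (K' w) w) ∧ K' = _ :=
      ⟨_, hKd, rfl⟩
    obtain ⟨B, hB⟩ : ∃ B, ∀ w, |K' w| ≤ B := by
      rw [hK']
      exact ⟨_, (fun w => by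
        have hv := hvb θ w
        have hp := bp θ w
        have hq := bq θ w
        have hr := br θ w
        have hI := hI1 θ w
        have hinv := rt_bd3 (gaussI_pos _) (hIb θ w) (Real.sin θ * mehler f1 θ w)
        have hk := bd_add (bd_mul (bd_mul (bd_neg (rt_bd1 (gaussI_pos (mehler f0 θ w))
          (Real.sin θ * mehler f1 θ w))) hv)
          hp) (bd_mul (rt_bd2 (gaussI_pos (mehler f0 θ w)) (Real.sin θ * mehler f1 θ w))
          (bd_mul hs1' hq))
        exact bd_mul (bd_mul hc1' hs1') (bd_sub (bd_mul (bd_add (bd_add (bd_sub (bd_sub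
          (bd_mul (bd_mul (bd_mul hv hv) hp) hp) (bd_mul hp hp)) (bd_mul (bd_mul hI hv) hq))
          (bd_mul (bd_mul (bd_mul hs1' hs1') hq) hq)) (bd_mul (bd_mul (bd_mul hs1' hs1') hp) hr))
          hinv) (bd_mul (bd_mul hk hk) hinv)))⟩
    have st := stein hKK' bK hB
    have mK' : Measurable K' := by
      have : K' = deriv K := funext fun x => (hKK' x).deriv.symm
      rw [this]; exact measurable_deriv K
    have iK' : Integrable K' (gaussianReal 0 1) := integrable_of_bdd mK' hB
    have iwK : Integrable (fun w => w * K w) (gaussianReal 0 1) :=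
      Integrable.mul_bdd iw cK.aestronglyMeasurable (Eventually.of_forall bK)
    have e : ∫ w, F' θ w ∂(gaussianReal 0 1)
        = ∫ w, (K' w + (F' θ w - w * K w)) ∂(gaussianReal 0 1) := by
      have i3 : Integrable (fun w => F' θ w - w * K w) (gaussianReal 0 1) := (key θ).1.sub iwK
      rw [integral_add iK' i3, integral_sub (key θ).1 iwK, st]; ring
    rw [e]
    refine integral_nonneg fun w => ?_
    have hg := hG0 θ w
    have al := alg_nonneg (I := gaussI (mehler f0 θ w)) (v := PhiInv (mehler f0 θ w))
      (p := mehler f1 θ w) (q := mehler f2 θ w) (r := mehler f3 θ w) hg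
      (rt_sq _ _) hs hc
    have e2 : F' θ w - w * K w = (gaussI (mehler f0 θ w) * PhiInv (mehler f0 θ w) * Real.sin θ *
        Real.cos θ * mehler f2 θ w + Real.sin θ * Real.cos θ * mehler f1 θ w ^ 2 -
        Real.sin θ ^ 3 * Real.cos θ * mehler f1 θ w * mehler f3 θ w) / G θ w := by
      have hg' := hg.ne'
      simp only [F', hK]
      change _ - w * (Real.cos θ * (-(gaussI (mehler f0 θ w) / G θ w) * PhiInv (mehler f0 θ w) *
        mehler f1 θ w + (Real.sin θ * mehler f1 θ w) / G θ w * (Real.sin θ * mehler f2 θ w))) = _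
      field_simp
      ring
    rw [Pi.zero_apply, e2, hK']
    exact al
  have mono : MonotoneOn (fun θ => ∫ w, G θ w ∂(gaussianReal 0 1)) (Set.Icc 0 (Real.pi / 2)) := by
    refine monotoneOn_of_deriv_nonneg (convex_Icc _ _)
      (fun θ _ => (key θ).2.continuousAt.continuousWithinAt)
      (fun θ _ => (key θ).2.differentiableAt.differentiableWithinAt) fun θ hθ => ?_
    rw [interior_Icc] at hθ
    rw [(key θ).2.deriv]
    exact nonneg θ (Real.sin_nonneg_of_nonneg_of_le_pi hθ.1.le (by linarith [hθ.1, hθ.2]))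
      (Real.cos_nonneg_of_neg_pi_div_two_le_of_le (by linarith [hθ.1, hθ.2]) hθ.2.le)
  have h := mono (Set.left_mem_Icc.2 Real.pi_div_two_pos.le) (Set.right_mem_Icc.2 Real.pi_div_two_pos.le)
    Real.pi_div_two_pos.le
  simpa [hGdef, mehler, rt, Real.sqrt_sq (gaussI_pos _).le] using h

lemma gaussPdf_tendsto_zero {l : Filter ℝ} (h : Tendsto (fun z : ℝ => z ^ 2) l atTop) :
    Tendsto gaussPdf l (𝓝 0) := by
  have h1 : Tendsto (fun z : ℝ => -z ^ 2 / 2) l atBot := by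
    have := (tendsto_neg_atTop_atBot.comp h).atBot_div_const (r := 2) (by norm_num)
    exact this
  have := (Real.tendsto_exp_atBot.comp h1).const_mul ((Real.sqrt (2 * Real.pi))⁻¹)
  rw [mul_zero] at this
  exact this

lemma gaussI_tendsto_zero : Tendsto gaussI (𝓝[Set.Ioo 0 1] 0) (𝓝 0) := by
  have h1 : Tendsto PhiInv (𝓝[Set.Ioo 0 1] 0) atBot := by
    rw [tendsto_atBot]
    intro r
    filter_upwards [self_mem_nhdsWithin, mem_nhdsWithin_of_mem_nhds (Iio_mem_nhds (Phi_mem r).1)]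
      with a ha har
    rw [← Phi_strictMono.le_iff_le, Phi_PhiInv ha]; exact le_of_lt har
  refine (gaussPdf_tendsto_zero (l := atBot) ?_).comp h1
  exact (tendsto_pow_atTop two_ne_zero).comp tendsto_abs_atBot_atTop |>.congr fun x => by simp

lemma gaussI_tendsto_one : Tendsto gaussI (𝓝[Set.Ioo 0 1] 1) (𝓝 0) := by
  have h1 : Tendsto PhiInv (𝓝[Set.Ioo 0 1] 1) atTop := by
    rw [tendsto_atTop]
    intro r
    filter_upwards [self_mem_nhdsWithin, mem_nhdsWithin_of_mem_nhds (Ioi_mem_nhds (Phi_mem r).2)]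
      with a ha har
    rw [← Phi_strictMono.le_iff_le, Phi_PhiInv ha]; exact le_of_lt har
  exact (gaussPdf_tendsto_zero (l := atTop) (tendsto_pow_atTop two_ne_zero)).comp h1

lemma gaussI_out {a : ℝ} (ha : a ∉ Set.Ioo (0:ℝ) 1) : gaussI a = gaussI 0 := by
  have h : ∀ a : ℝ, a ∉ Set.Ioo (0:ℝ) 1 → ¬ ∃ r, Phi r = a := by
    rintro a ha ⟨r, rfl⟩; exact ha (Phi_mem r)
  unfold gaussI PhiInv
  rw [Function.invFun_neg (h a ha), Function.invFun_neg (h 0 (by simp))]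

lemma gaussI_measurable : Measurable gaussI := by
  classical
  have h : gaussI = (Set.Ioo (0:ℝ) 1).piecewise gaussI (fun _ => gaussI 0) := by
    funext a
    by_cases ha : a ∈ Set.Ioo (0:ℝ) 1
    · rw [Set.piecewise_eq_of_mem _ _ _ ha]
    · rw [Set.piecewise_eq_of_notMem _ _ _ ha, gaussI_out ha]
  rw [h]
  exact ContinuousOn.measurable_piecewise
    (fun x hx => (gaussI_hasDerivAt hx).continuousAt.continuousWithinAt)
    continuousOn_const measurableSet_Ioo

open Classical in
/-- The true profile with value zero at the endpoints. -/
noncomputable def profile (a : ℝ) : ℝ := if a ∈ Set.Ioo (0:ℝ) 1 then gaussI a else 0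

lemma profile_nonneg (a : ℝ) : 0 ≤ profile a := by
  unfold profile; split_ifs; exacts [(gaussI_pos a).le, le_rfl]
lemma profile_le (a : ℝ) : profile a ≤ gaussI a := by
  unfold profile; split_ifs; exacts [le_rfl, (gaussI_pos a).le]

lemma profile_tendsto {a : ℝ} (ha : a ∈ Set.Icc (0:ℝ) 1) :
    Tendsto gaussI (𝓝[Set.Ioo 0 1] a) (𝓝 (profile a)) := by
  by_cases h : a ∈ Set.Ioo (0:ℝ) 1
  · unfold profile; rw [if_pos h]
    exact (gaussI_hasDerivAt h).continuousAt.tendsto.mono_left nhdsWithin_le_nhds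
  · have : a = 0 ∨ a = 1 := by
      rcases ha.1.eq_or_lt with h0 | h0
      · exact Or.inl h0.symm
      · rcases ha.2.eq_or_lt with h1 | h1
        · exact Or.inr h1
        · exact absurd ⟨h0, h1⟩ h
    unfold profile; rw [if_neg h]
    rcases this with rfl | rfl
    exacts [gaussI_tendsto_zero, gaussI_tendsto_one]

lemma bobkov_cpt {h : ℝ → ℝ} {ε : ℝ} (hε : 0 < ε) (hh : ContDiff ℝ (⊤ : ℕ∞) h)
    (hs : HasCompactSupport h) (h01 : ∀ x, ε + h x ∈ Set.Icc ε (1 - ε)) :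
    gaussI (∫ x, (ε + h x) ∂(gaussianReal 0 1)) ≤
      ∫ x, rt (gaussI (ε + h x)) (deriv h x) ∂(gaussianReal 0 1) := by
  have c1 : ContDiff ℝ (⊤ : ℕ∞) (deriv h) := (contDiff_infty_iff_deriv.1 hh).2
  have c2 : ContDiff ℝ (⊤ : ℕ∞) (deriv (deriv h)) := (contDiff_infty_iff_deriv.1 c1).2
  have c3 : ContDiff ℝ (⊤ : ℕ∞) (deriv (deriv (deriv h))) := (contDiff_infty_iff_deriv.1 c2).2
  obtain ⟨B1, hB1⟩ := hs.deriv.exists_bound_of_continuous c1.continuous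
  obtain ⟨B2, hB2⟩ := hs.deriv.deriv.exists_bound_of_continuous c2.continuous
  obtain ⟨B3, hB3⟩ := hs.deriv.deriv.deriv.exists_bound_of_continuous c3.continuous
  have p1 := (norm_nonneg _).trans (hB1 0)
  have p2 := (norm_nonneg _).trans (hB2 0)
  have p3 := (norm_nonneg _).trans (hB3 0)
  refine bobkov_nice (M := 1 + B1 + B2 + B3) hε h01
    (fun x => ((hh.differentiable (by simp)) x).hasDerivAt.const_add ε)
    (fun x => ((c1.differentiable (by simp)) x).hasDerivAt)
    (fun x => ((c2.differentiable (by simp)) x).hasDerivAt) c3.continuous ?_ ?_ ?_ ?_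
  · intro x; rw [abs_le]; constructor <;> linarith [(h01 x).1, (h01 x).2]
  · intro x; exact (hB1 x).trans (by linarith)
  · intro x; exact (hB2 x).trans (by linarith)
  · intro x; exact (hB3 x).trans (by linarith)

lemma rt_le_add {I P A B : ℝ} (hI : |I| ≤ A) (hP : |P| ≤ B) : |rt I P| ≤ A + B := by
  rw [abs_of_nonneg (show 0 ≤ rt I P from Real.sqrt_nonneg _)]
  refine le_trans ?_ (add_le_add hI hP)
  apply Real.sqrt_le_iff.2 ⟨by positivity, ?_⟩
  rw [← sq_abs I, ← sq_abs P]
  nlinarith [mul_nonneg (abs_nonneg I) (abs_nonneg P)]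

lemma bobkov_std {f : ℝ → ℝ} (hf : ContDiff ℝ (⊤ : ℕ∞) f)
    (hf01 : ∀ x, f x ∈ Set.Icc (0 : ℝ) 1) {C : ℝ} (hC : ∀ x, |deriv f x| ≤ C) :
    gaussI (∫ x, f x ∂(gaussianReal 0 1)) ≤
      ∫ x, rt (gaussI (f x)) (deriv f x) ∂(gaussianReal 0 1) := by
  have hfb : ∀ x, |f x| ≤ 1 := fun x => abs_le.2 ⟨by linarith [(hf01 x).1], (hf01 x).2⟩
  have cf' : Continuous (deriv f) := (contDiff_infty_iff_deriv.1 hf).2.continuous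
  have cf := hf.continuous
  have hC0 := (abs_nonneg _).trans (hC 0)
  have hIabs : ∀ a, |gaussI a| ≤ 1 := fun a => by
    rw [abs_of_pos (gaussI_pos _)]; exact gaussI_le_one a
  have if0 : Integrable f (gaussianReal 0 1) := integrable_of_bdd cf.measurable hfb
  have mI := gaussI_measurable.comp cf.measurable
  have irhs : Integrable (fun x => rt (gaussI (f x)) (deriv f x)) (gaussianReal 0 1) := by
    refine integrable_of_bdd (M := 1 + C) ?_ (fun x => rt_le_add (hIabs _) (hC x))
    unfold rt
    exact ((mI.pow_const 2).add (cf'.measurable.pow_const 2)).sqrt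
  have iI : Integrable (fun x => gaussI (f x)) (gaussianReal 0 1) :=
    integrable_of_bdd mI (fun x => hIabs _)
  have hle : ∫ x, gaussI (f x) ∂(gaussianReal 0 1) ≤
      ∫ x, rt (gaussI (f x)) (deriv f x) ∂(gaussianReal 0 1) :=
    integral_mono iI irhs fun x => le_rt _
  by_cases hm : (∫ x, f x ∂(gaussianReal 0 1)) ∈ Set.Ioo (0:ℝ) 1
  swap
  · -- degenerate case
    refine le_trans (le_of_eq ?_) hle
    have hae : ∀ᵐ x ∂(gaussianReal 0 1), gaussI (f x) = gaussI 0 := by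
      have h0 : 0 ≤ ∫ x, f x ∂(gaussianReal 0 1) := integral_nonneg fun x => (hf01 x).1
      rcases h0.eq_or_lt with h0 | h0
      · have := (integral_eq_zero_iff_of_nonneg (fun x => (hf01 x).1) if0).1 h0.symm
        filter_upwards [this] with x hx
        rw [hx]; rfl
      · have h1 : ∫ x, (1 - f x) ∂(gaussianReal 0 1) = 0 := by
          have h2 : 0 ≤ ∫ x, (1 - f x) ∂(gaussianReal 0 1) :=
            integral_nonneg fun x => sub_nonneg.2 (hf01 x).2
          have h3 : ∫ x, (1 - f x) ∂(gaussianReal 0 1) = 1 - ∫ x, f x ∂(gaussianReal 0 1) := by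
            rw [integral_sub (integrable_const _) if0]; simp
          by_contra hne
          exact hm ⟨h0, by linarith [lt_of_le_of_ne h2 (Ne.symm hne)]⟩
        have := (integral_eq_zero_iff_of_nonneg (fun x => sub_nonneg.2 (hf01 x).2)
          ((integrable_const _).sub if0)).1 h1
        filter_upwards [this] with x hx
        have : f x = 1 := by simp at hx; linarith
        rw [this]; exact gaussI_out (by simp)
    rw [integral_congr_ae hae, gaussI_out hm]; simp
  -- main case
  let χ : ContDiffBump (0:ℝ) := ⟨1, 2, by norm_num, by norm_num⟩
  have χc : ContDiff ℝ (⊤ : ℕ∞) χ := χ.contDiff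
  have χ'c : Continuous (deriv χ) := (contDiff_infty_iff_deriv.1 χc).2.continuous
  obtain ⟨B, hB⟩ := χ.hasCompactSupport.deriv.exists_bound_of_continuous χ'c
  have hB0 := (norm_nonneg _).trans (hB 0)
  let δ : ℕ → ℝ := fun n => 1 / ((n:ℝ) + 1)
  have hδ0 : ∀ n, 0 < δ n := fun n => by positivity
  have hδ1 : ∀ n, δ n ≤ 1 := fun n => by
    simp only [δ]; rw [div_le_one (by positivity)]; linarith [(Nat.cast_nonneg n : (0:ℝ) ≤ n)]
  have hδ : Tendsto δ atTop (𝓝 0) := tendsto_one_div_add_atTop_nhds_zero_nat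
  let h : ℕ → ℝ → ℝ := fun n x => (1 - 2 * (δ n / 3)) * (χ (δ n * x) * f x)
  have hcd : ∀ n, ContDiff ℝ (⊤ : ℕ∞) (h n) := fun n =>
    contDiff_const.mul ((χc.comp (contDiff_const.mul contDiff_id)).mul hf)
  have hsupp : ∀ n, HasCompactSupport (h n) := fun n => by
    have h1 : HasCompactSupport (fun x => χ (δ n * x)) :=
      χ.hasCompactSupport.comp_homeomorph (Homeomorph.mulLeft₀ (δ n) (hδ0 n).ne')
    exact (h1.mul_right (f' := f)).mul_left (f := fun _ => (1 - 2 * (δ n / 3)))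
  have hχf : ∀ n x, χ (δ n * x) * f x ∈ Set.Icc (0:ℝ) 1 := fun n x =>
    ⟨mul_nonneg χ.nonneg (hf01 x).1, mul_le_one₀ χ.le_one (hf01 x).1 (hf01 x).2⟩
  have hmem : ∀ n x, δ n / 3 + h n x ∈ Set.Icc (δ n / 3) (1 - δ n / 3) := fun n x => by
    have h1 := hχf n x
    have h2 := hδ0 n
    have h3 := hδ1 n
    simp only [h]
    constructor
    · nlinarith [h1.1]
    · nlinarith [h1.2]
  have hIoo : ∀ n x, δ n / 3 + h n x ∈ Set.Ioo (0:ℝ) 1 := fun n x =>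
    ⟨by linarith [(hmem n x).1, hδ0 n], by linarith [(hmem n x).2, hδ0 n]⟩
  have hder : ∀ n x, deriv (h n) x = (1 - 2 * (δ n / 3)) *
      (δ n * deriv χ (δ n * x) * f x + χ (δ n * x) * deriv f x) := fun n x => by
    have h1 : HasDerivAt (fun x => δ n * x) (δ n) x := by
      simpa using (hasDerivAt_id x).const_mul (δ n)
    have h2 := ((χc.differentiable (by simp)) (δ n * x)).hasDerivAt.comp x h1
    have h3 := ((hf.differentiable (by simp)) x).hasDerivAt
    refine ((h2.mul h3).const_mul (1 - 2 * (δ n / 3))).deriv.trans ?_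
    simp only [Function.comp_apply]; ring
  have hderb : ∀ n x, |deriv (h n) x| ≤ 1 * (1 * B * 1 + 1 * C) := fun n x => by
    rw [hder]
    have h1 : |δ n| ≤ 1 := by rw [abs_of_pos (hδ0 n)]; exact hδ1 n
    have h2 : |1 - 2 * (δ n / 3)| ≤ 1 := by
      rw [abs_le]; constructor <;> linarith [hδ0 n, hδ1 n]
    have h3 : |χ (δ n * x)| ≤ 1 := by rw [abs_of_nonneg χ.nonneg]; exact χ.le_one
    exact bd_mul h2 (bd_add (bd_mul (bd_mul h1 (hB _)) (hfb x)) (bd_mul h3 (hC x)))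
  have hbn := fun n => bobkov_cpt (by have := hδ0 n; positivity : 0 < δ n / 3) (hcd n) (hsupp n) (hmem n)
  -- limits
  have hδx : ∀ x : ℝ, Tendsto (fun n => δ n * x) atTop (𝓝 0) := fun x => by
    simpa using hδ.mul_const x
  have hχ1 : ∀ x : ℝ, Tendsto (fun n => χ (δ n * x)) atTop (𝓝 1) := fun x => by
    have h1 : χ (0:ℝ) = 1 := χ.one_of_mem_closedBall (by simp [χ])
    have := (χc.continuous.tendsto 0).comp (hδx x)
    rwa [h1] at this
  have hχ' : ∀ x : ℝ, Tendsto (fun n => deriv χ (δ n * x)) atTop (𝓝 (deriv χ 0)) := fun x =>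
    (χ'c.tendsto 0).comp (hδx x)
  have hpre : Tendsto (fun n => 1 - 2 * (δ n / 3)) atTop (𝓝 1) := by
    simpa using ((hδ.div_const 3).const_mul 2).const_sub 1
  have hg : ∀ x, Tendsto (fun n => δ n / 3 + h n x) atTop (𝓝 (f x)) := fun x => by
    simpa using (hδ.div_const 3).add (hpre.mul ((hχ1 x).mul_const (f x)))
  have hg' : ∀ x, Tendsto (fun n => deriv (h n) x) atTop (𝓝 (deriv f x)) := fun x => by
    simp_rw [hder]
    simpa using hpre.mul (((hδ.mul (hχ' x)).mul_const (f x)).add ((hχ1 x).mul_const (deriv f x)))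
  have L1 : Tendsto (fun n => ∫ x, (δ n / 3 + h n x) ∂(gaussianReal 0 1)) atTop
      (𝓝 (∫ x, f x ∂(gaussianReal 0 1))) := by
    refine tendsto_integral_of_dominated_convergence (fun _ => 1)
      (fun n => ((hcd n).continuous.const_add _).aestronglyMeasurable) (integrable_const _)
      (fun n => Eventually.of_forall fun x => ?_) (Eventually.of_forall hg)
    rw [Real.norm_eq_abs, abs_of_pos (hIoo n x).1]; exact (hIoo n x).2.le
  have L2 : Tendsto (fun n => ∫ x, rt (gaussI (δ n / 3 + h n x)) (deriv (h n) x) ∂(gaussianReal 0 1))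
      atTop (𝓝 (∫ x, rt (profile (f x)) (deriv f x) ∂(gaussianReal 0 1))) := by
    refine tendsto_integral_of_dominated_convergence (fun _ => 1 + 1 * (1 * B * 1 + 1 * C))
      (fun n => ?_) (integrable_const _)
      (fun n => Eventually.of_forall fun x => rt_le_add (hIabs _) (hderb n x))
      (Eventually.of_forall fun x => ?_)
    · have m1 := gaussI_measurable.comp ((hcd n).continuous.const_add (δ n / 3)).measurable
      have m2 := (contDiff_infty_iff_deriv.1 (hcd n)).2.continuous.measurable
      unfold rt
      exact ((m1.pow_const 2).add (m2.pow_const 2)).sqrt.aestronglyMeasurable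
    · have t1 : Tendsto (fun n => gaussI (δ n / 3 + h n x)) atTop (𝓝 (profile (f x))) :=
        (profile_tendsto (hf01 x)).comp (tendsto_nhdsWithin_iff.2
          ⟨hg x, Eventually.of_forall fun n => hIoo n x⟩)
      exact ((t1.pow 2).add ((hg' x).pow 2)).sqrt
  have L3 := (gaussI_hasDerivAt hm).continuousAt.tendsto.comp L1
  refine (le_of_tendsto_of_tendsto' L3 L2 hbn).trans ?_
  refine integral_mono_of_nonneg (Eventually.of_forall fun x => Real.sqrt_nonneg _) irhs
    (Eventually.of_forall fun x => ?_)
  apply Real.sqrt_le_sqrt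
  have := profile_le (f x)
  have := profile_nonneg (f x)
  gcongr

/-- Bobkov's inequality for the centered Gaussian measure `γ` of variance `2τ` on `ℝ`:
every smooth `f : ℝ → [0,1]` with bounded derivative satisfies
`I(∫ f dγ) ≤ ∫ √(I(f)² + 2τ f'²) dγ`. -/
theorem stmt19 (τ : ℝ) (hτ : 0 < τ) (f : ℝ → ℝ) (hf : ContDiff ℝ (⊤ : ℕ∞) f)
    (hf01 : ∀ x, f x ∈ Set.Icc (0 : ℝ) 1) (C : ℝ) (hC : ∀ x, |deriv f x| ≤ C) :
    gaussI (∫ x, f x ∂(gaussianReal 0 ((2 * τ).toNNReal))) ≤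
      ∫ x, Real.sqrt (gaussI (f x) ^ 2 + 2 * τ * (deriv f x) ^ 2)
        ∂(gaussianReal 0 ((2 * τ).toNNReal)) := by

  set σ := Real.sqrt (2 * τ) with hσ
  have hσ0 : 0 < σ := Real.sqrt_pos.2 (by positivity)
  have hσ2 : σ ^ 2 = 2 * τ := Real.sq_sqrt (by positivity)
  have hmap : gaussianReal 0 ((2 * τ).toNNReal) = (gaussianReal 0 1).map (fun x => σ * x) := by
    rw [gaussianReal_map_const_mul]
    congr 1
    · simp
    · ext
      simp [hσ2, hτ.le]
  have hemb : MeasurableEmbedding (fun x : ℝ => σ * x) :=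
    (Homeomorph.mulLeft₀ σ hσ0.ne').measurableEmbedding
  rw [hmap, hemb.integral_map, hemb.integral_map]
  have hd : ∀ x, deriv (fun x => f (σ * x)) x = σ * deriv f (σ * x) := fun x => by
    have h1 : HasDerivAt (fun x => σ * x) σ x := by
      simpa using (hasDerivAt_id x).const_mul σ
    have h2 := ((hf.differentiable (by simp)) (σ * x)).hasDerivAt.comp x h1
    have h3 := h2.deriv
    rw [mul_comm]; exact h3
  have := bobkov_std (f := fun x => f (σ * x)) (hf.comp (contDiff_const.mul contDiff_id))
    (fun x => hf01 _) (C := σ * C) (fun x => by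
      rw [hd, abs_mul, abs_of_pos hσ0]; exact mul_le_mul_of_nonneg_left (hC _) hσ0.le)
  simp_rw [hd, rt, mul_pow, hσ2] at this
  exact this
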